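/- Let n ≥ 1 and let t_{n+1} be the Drinfeld–Kohno Lie algebra on the index set {1, …, n+1}. The Lie algebra homomorphism from the free Lie algebra over ℂ on n generators x_1, …, x_n to t_{n+1} determined by x_k ↦ t_{k,n+1} is injective; in other words, the elements t_{1,n+1}, …, t_{n,n+1} generate a free Lie subalgebra 𝔣_n of t_{n+1}. -/

import Mathlib

/-!
The theorem follows from an explicit representation of `t_{n+1}`. Let `F` be the free Lie algebra
on `x_1, …, x_n`, and for indices `i, j ≤ n` let `D_{ij}` be the derivation of `F` with
`D_{ij} x_i = ⁅x_i, x_j⁆`, `D_{ij} x_j = ⁅x_j, x_i⁆` and `D_{ij} x_k = 0` for every other `k`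
(this is how `t_{ij}` must act on the `t_{k,n+1}`). The derivations `D_{ij}` themselves satisfy
the Drinfeld–Kohno relations, as one checks on generators, so
`t_{i,n+1} ↦ (x_i, 0)`, `t_{ij} ↦ (0, D_{ij})` respects all defining relations of `t_{n+1}` with
values in the semidirect sum `F ⋊ Der F` (`dkRepr_eq_zero_of_mem`). Composed with
`x_k ↦ t_{k,n+1}` this is the inclusion of `F` into `F ⋊ Der F`, which is injective.
-/

/-!
The Drinfeld–Kohno Lie algebra `t_N` over ℂ: the quotient of the free Lie algebra on
generators `t_{i,j}` indexed by ordered pairs of distinct elements `i, j` of `{1, …, N}`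
by the Lie ideal generated by the elements `t_{i,j} − t_{j,i}` (`i ≠ j`),
`⁅t_{i,j}, t_{k,l}⁆` (`i, j, k, l` pairwise distinct), and
`⁅t_{i,j} + t_{i,k}, t_{j,k}⁆` (`i, j, k` pairwise distinct).
-/

/-- Ordered pairs of distinct indices in `{0, …, N-1}`. -/
def DKGen (N : ℕ) : Type := {p : Fin N × Fin N // p.1 ≠ p.2}

/-- The free generators, extended by `0` to coinciding pairs. -/
noncomputable def dkGen (N : ℕ) (i j : Fin N) : FreeLieAlgebra ℂ (DKGen N) :=
  if h : i ≠ j then FreeLieAlgebra.of ℂ (⟨(i, j), h⟩ : DKGen N) else 0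

/-- The set of defining relators of the Drinfeld–Kohno Lie algebra. -/
def dkRelators (N : ℕ) : Set (FreeLieAlgebra ℂ (DKGen N)) :=
  {x | (∃ i j : Fin N, i ≠ j ∧ x = dkGen N i j - dkGen N j i) ∨
    (∃ i j k l : Fin N, i ≠ j ∧ i ≠ k ∧ i ≠ l ∧ j ≠ k ∧ j ≠ l ∧ k ≠ l ∧
      x = ⁅dkGen N i j, dkGen N k l⁆) ∨
    (∃ i j k : Fin N, i ≠ j ∧ i ≠ k ∧ j ≠ k ∧
      x = ⁅dkGen N i j + dkGen N i k, dkGen N j k⁆)}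

/-- The Lie ideal of relations. -/
noncomputable def dkIdeal (N : ℕ) : LieIdeal ℂ (FreeLieAlgebra ℂ (DKGen N)) :=
  LieSubmodule.lieSpan ℂ (FreeLieAlgebra ℂ (DKGen N)) (dkRelators N)

/-- The Drinfeld–Kohno Lie algebra `t_N`. -/
abbrev DK (N : ℕ) := FreeLieAlgebra ℂ (DKGen N) ⧸ dkIdeal N

/-- The generators `t_{i,j}` of the Drinfeld–Kohno Lie algebra `t_N`. -/
noncomputable def tDK (N : ℕ) (i j : Fin N) : DK N :=
  LieSubmodule.Quotient.mk' (dkIdeal N) (dkGen N i j)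

open LieAlgebra

/-! ### Derivations of a free Lie algebra -/

/-- The Lie algebra `L ⊗ R[ε]/(ε²)`, with the pair `(a, b)` standing for `a + ε b`. -/
def DualLie (L : Type*) : Type _ := L × L

namespace DualLie

variable {R L : Type*}

/-- The element `a + ε b`. -/
def mk (a b : L) : DualLie L := (a, b)

@[simp] theorem mk_fst (a b : L) : (mk a b).1 = a := rfl
@[simp] theorem mk_snd (a b : L) : (mk a b).2 = b := rfl

theorem ext' {x y : DualLie L} (h₁ : x.1 = y.1) (h₂ : x.2 = y.2) : x = y := Prod.ext h₁ h₂

variable [CommRing R] [LieRing L] [LieAlgebra R L]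

instance : AddCommGroup (DualLie L) := inferInstanceAs (AddCommGroup (L × L))

instance : Module R (DualLie L) := inferInstanceAs (Module R (L × L))

instance : Bracket (DualLie L) (DualLie L) where
  bracket x y := mk ⁅x.1, y.1⁆ (⁅x.1, y.2⁆ + ⁅x.2, y.1⁆)

@[simp] theorem add_fst (x y : DualLie L) : (x + y).1 = x.1 + y.1 := rfl
@[simp] theorem add_snd (x y : DualLie L) : (x + y).2 = x.2 + y.2 := rfl
@[simp] theorem zero_fst : (0 : DualLie L).1 = 0 := rfl
@[simp] theorem zero_snd : (0 : DualLie L).2 = 0 := rfl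
@[simp] theorem smul_fst (t : R) (x : DualLie L) : (t • x).1 = t • x.1 := rfl
@[simp] theorem smul_snd (t : R) (x : DualLie L) : (t • x).2 = t • x.2 := rfl
@[simp] theorem lie_fst (x y : DualLie L) : ⁅x, y⁆.1 = ⁅x.1, y.1⁆ := rfl
@[simp] theorem lie_snd (x y : DualLie L) : ⁅x, y⁆.2 = ⁅x.1, y.2⁆ + ⁅x.2, y.1⁆ := rfl

instance : LieRing (DualLie L) where
  add_lie x y z := ext' (by simp) (by simp; abel)
  lie_add x y z := ext' (by simp) (by simp; abel)
  lie_self x := ext' (by simp) (by rw [lie_snd, ← lie_skew x.2, add_neg_cancel, zero_snd])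
  leibniz_lie x y z := ext' (by simp) (by simp; abel)

instance : LieAlgebra R (DualLie L) where
  lie_smul t x y := ext' (by simp) (by simp)

/-- The projection `a + ε b ↦ a`. -/
def fstHom (R L : Type*) [CommRing R] [LieRing L] [LieAlgebra R L] : DualLie L →ₗ⁅R⁆ L where
  toFun x := x.1
  map_add' _ _ := rfl
  map_smul' _ _ := rfl
  map_lie' := rfl

end DualLie

section Derivation

variable {R X : Type*} [CommRing R]

theorem freeLie_dual_fst (f : X → FreeLieAlgebra R X) (a : FreeLieAlgebra R X) :
    (FreeLieAlgebra.lift R (L := DualLie (FreeLieAlgebra R X))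
      (fun x => DualLie.mk (FreeLieAlgebra.of R x) (f x)) a).1 = a := by
  have h : (DualLie.fstHom R (FreeLieAlgebra R X)).comp
      (FreeLieAlgebra.lift R (L := DualLie (FreeLieAlgebra R X))
        (fun x => DualLie.mk (FreeLieAlgebra.of R x) (f x))) = LieHom.id := by
    ext x
    rw [LieHom.comp_apply, FreeLieAlgebra.lift_of_apply]
    rfl
  exact LieHom.congr_fun h a

/-- The derivation of the free Lie algebra with prescribed values `f` on the generators: the
`ε`-part of the homomorphism `x ↦ x + ε f x`. -/
noncomputable def freeLieDer (f : X → FreeLieAlgebra R X) :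
    LieDerivation R (FreeLieAlgebra R X) (FreeLieAlgebra R X) where
  toFun a := (FreeLieAlgebra.lift R (L := DualLie (FreeLieAlgebra R X))
    (fun x => DualLie.mk (FreeLieAlgebra.of R x) (f x)) a).2
  map_add' a b := by simp
  map_smul' t a := by simp
  leibniz' a b := by
    simp only [LinearMap.coe_mk, AddHom.coe_mk, LieHom.map_lie, DualLie.lie_snd,
      freeLie_dual_fst]
    rw [← lie_skew b, sub_neg_eq_add]

@[simp] theorem freeLieDer_of (f : X → FreeLieAlgebra R X) (x : X) :
    freeLieDer f (FreeLieAlgebra.of R x) = f x := by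
  change (FreeLieAlgebra.lift R (L := DualLie (FreeLieAlgebra R X))
    (fun x => DualLie.mk (FreeLieAlgebra.of R x) (f x)) (FreeLieAlgebra.of R x)).2 = f x
  rw [FreeLieAlgebra.lift_of_apply, DualLie.mk_snd]

/-- A derivation `D` is determined by its values on the free generators, because
`a ↦ a + ε D a` is a homomorphism of Lie algebras. -/
theorem freeLieDer_ext {D E : LieDerivation R (FreeLieAlgebra R X) (FreeLieAlgebra R X)}
    (h : ∀ x, D (FreeLieAlgebra.of R x) = E (FreeLieAlgebra.of R x)) : D = E := by
  let toDual (D : LieDerivation R (FreeLieAlgebra R X) (FreeLieAlgebra R X)) :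
      FreeLieAlgebra R X →ₗ⁅R⁆ DualLie (FreeLieAlgebra R X) :=
    { toFun := fun a => DualLie.mk a (D a)
      map_add' := fun a b => DualLie.ext' rfl (map_add D a b)
      map_smul' := fun t a => DualLie.ext' rfl (map_smul D t a)
      map_lie' := fun {a b} => DualLie.ext' rfl (D.apply_lie_eq_add a b) }
  have key : toDual D = toDual E :=
    FreeLieAlgebra.hom_ext fun x => DualLie.ext' rfl (h x)
  ext a
  exact congrArg Prod.snd (LieHom.congr_fun key a)

end Derivation

/-! ### The derivations `D_{ij}` -/

section DKDer

variable {n : ℕ}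

/-- The derivation `D_{ij}`, through which `t_{ij}` acts on the free Lie algebra on the
`t_{k,n+1}`. For `i = j` it vanishes. -/
noncomputable def dkDer (i j : Fin n) :
    LieDerivation ℂ (FreeLieAlgebra ℂ (Fin n)) (FreeLieAlgebra ℂ (Fin n)) :=
  freeLieDer fun k =>
    if k = i then ⁅FreeLieAlgebra.of ℂ i, FreeLieAlgebra.of ℂ j⁆
    else if k = j then ⁅FreeLieAlgebra.of ℂ j, FreeLieAlgebra.of ℂ i⁆ else 0

theorem dkDer_of (i j k : Fin n) : dkDer i j (FreeLieAlgebra.of ℂ k) =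
    if k = i then ⁅FreeLieAlgebra.of ℂ i, FreeLieAlgebra.of ℂ j⁆
    else if k = j then ⁅FreeLieAlgebra.of ℂ j, FreeLieAlgebra.of ℂ i⁆ else 0 := by
  simp [dkDer]

theorem dkDer_left (i j : Fin n) : dkDer i j (FreeLieAlgebra.of ℂ i) =
    ⁅FreeLieAlgebra.of ℂ i, FreeLieAlgebra.of ℂ j⁆ := by
  simp [dkDer_of]

theorem dkDer_right (i j : Fin n) : dkDer i j (FreeLieAlgebra.of ℂ j) =
    ⁅FreeLieAlgebra.of ℂ j, FreeLieAlgebra.of ℂ i⁆ := by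
  rw [dkDer_of]
  by_cases h : j = i <;> simp [h]

theorem dkDer_other {i j k : Fin n} (hi : k ≠ i) (hj : k ≠ j) :
    dkDer i j (FreeLieAlgebra.of ℂ k) = 0 := by
  simp [dkDer_of, hi, hj]

theorem lie_add_lie_swap {L : Type*} [LieRing L] (x y : L) : ⁅x, y⁆ + ⁅y, x⁆ = 0 := by
  rw [← lie_skew y x, add_neg_cancel]

theorem dkDer_symm (i j : Fin n) : dkDer i j = dkDer j i := by
  refine freeLieDer_ext fun k => ?_
  by_cases hi : k = i
  · subst hi; rw [dkDer_left, dkDer_right]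
  by_cases hj : k = j
  · subst hj; rw [dkDer_left, dkDer_right]
  rw [dkDer_other hi hj, dkDer_other hj hi]

theorem dkDer_self (i : Fin n) : dkDer i i = 0 := by
  refine freeLieDer_ext fun k => ?_
  simp [dkDer_of]

theorem dkDer_comm {i j k l : Fin n} (hik : i ≠ k) (hil : i ≠ l) (hjk : j ≠ k) (hjl : j ≠ l) :
    ⁅dkDer i j, dkDer k l⁆ = 0 := by
  refine freeLieDer_ext fun m => ?_
  have h1 := dkDer_other hik hil
  have h2 := dkDer_other hjk hjl
  have h3 := dkDer_other hik.symm hjk.symm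
  have h4 := dkDer_other hil.symm hjl.symm
  by_cases hi : m = i
  · subst hi; simp [dkDer_left, h1, h2]
  by_cases hj : m = j
  · subst hj; simp [dkDer_right, h1, h2]
  by_cases hk : m = k
  · subst hk; simp [dkDer_left, h3, h4]
  by_cases hl : m = l
  · subst hl; simp [dkDer_right, h3, h4]
  simp [dkDer_other hi hj, dkDer_other hk hl]

theorem dkDer_triple {i j k : Fin n} (hij : i ≠ j) (hik : i ≠ k) (hjk : j ≠ k) :
    ⁅dkDer i j + dkDer i k, dkDer j k⁆ = 0 := by
  refine freeLieDer_ext fun m => ?_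
  have h1 := dkDer_other hij hik
  have h2 := dkDer_other hij.symm hjk
  have h3 := dkDer_other hik.symm hjk.symm
  by_cases hi : m = i
  · subst hi
    simp only [LieDerivation.commutator_apply, LieDerivation.add_apply,
      LieDerivation.apply_lie_eq_add, map_add, dkDer_left, dkDer_right, h1,
      LieDerivation.zero_apply, map_zero, zero_lie, add_zero]
    rw [← lie_skew (FreeLieAlgebra.of ℂ k) (FreeLieAlgebra.of ℂ j), lie_neg]
    abel
  by_cases hj : m = j
  · subst hj
    simp only [LieDerivation.commutator_apply, LieDerivation.add_apply,
      LieDerivation.apply_lie_eq_add, dkDer_left, dkDer_right, h1, h2, h3,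
      LieDerivation.zero_apply, lie_zero, add_zero, zero_add]
    rw [leibniz_lie (FreeLieAlgebra.of ℂ m) (FreeLieAlgebra.of ℂ k),
      ← lie_skew (FreeLieAlgebra.of ℂ k)]
    abel
  by_cases hk : m = k
  · subst hk
    simp only [LieDerivation.commutator_apply, LieDerivation.add_apply,
      LieDerivation.apply_lie_eq_add, dkDer_right, h1, h2, h3,
      LieDerivation.zero_apply, lie_zero, add_zero, zero_add]
    rw [leibniz_lie (FreeLieAlgebra.of ℂ m) (FreeLieAlgebra.of ℂ j),
      ← lie_skew (FreeLieAlgebra.of ℂ j)]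
    abel
  simp [dkDer_other hi hj, dkDer_other hi hk, dkDer_other hj hk]

end DKDer

/-! ### The representation of the Drinfeld–Kohno Lie algebra -/

section Repr

variable {n : ℕ}

/-- The semidirect sum `F ⋊ Der F` for `F` the free Lie algebra on `n` generators, with the
tautological action of `Der F`. -/
abbrev FreeDerSum (n : ℕ) : Type :=
  SemiDirectSum (FreeLieAlgebra ℂ (Fin n))
    (LieDerivation ℂ (FreeLieAlgebra ℂ (Fin n)) (FreeLieAlgebra ℂ (Fin n))) LieHom.id

/-- The image of `t_{ij}` in `F ⋊ Der F`, where the last index is the moving point. -/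
noncomputable def dkImg (i j : Fin (n + 1)) : FreeDerSum n :=
  Fin.lastCases (motive := fun _ => FreeDerSum n)
    (Fin.lastCases (motive := fun _ => FreeDerSum n) 0 (fun b => ⟨FreeLieAlgebra.of ℂ b, 0⟩) j)
    (fun a => Fin.lastCases (motive := fun _ => FreeDerSum n)
      ⟨FreeLieAlgebra.of ℂ a, 0⟩ (fun b => ⟨0, dkDer a b⟩) j) i

@[simp] theorem dkImg_last_last : dkImg (Fin.last n) (Fin.last n) = 0 := by simp [dkImg]
@[simp] theorem dkImg_last_cast (b : Fin n) :
    dkImg (Fin.last n) b.castSucc = ⟨FreeLieAlgebra.of ℂ b, 0⟩ := by simp [dkImg]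
@[simp] theorem dkImg_cast_last (a : Fin n) :
    dkImg a.castSucc (Fin.last n) = ⟨FreeLieAlgebra.of ℂ a, 0⟩ := by simp [dkImg]
@[simp] theorem dkImg_cast_cast (a b : Fin n) :
    dkImg a.castSucc b.castSucc = ⟨0, dkDer a b⟩ := by simp [dkImg]

theorem dkImg_self (i : Fin (n + 1)) : dkImg i i = 0 := by
  induction i using Fin.lastCases <;> simp [dkDer_self]

theorem dkImg_symm (i j : Fin (n + 1)) : dkImg i j = dkImg j i := by
  induction i using Fin.lastCases <;> induction j using Fin.lastCases <;> simp [dkDer_symm]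

theorem dkImg_comm {i j k l : Fin (n + 1)} (hij : i ≠ j) (hik : i ≠ k) (hil : i ≠ l)
    (hjk : j ≠ k) (hjl : j ≠ l) (hkl : k ≠ l) : ⁅dkImg i j, dkImg k l⁆ = 0 := by
  induction i using Fin.lastCases <;> induction j using Fin.lastCases <;>
    induction k using Fin.lastCases <;> induction l using Fin.lastCases <;>
    simp_all [dkDer_comm, dkDer_of, eq_comm]

theorem dkImg_triple {i j k : Fin (n + 1)} (hij : i ≠ j) (hik : i ≠ k)
    (hjk : j ≠ k) : ⁅dkImg i j + dkImg i k, dkImg j k⁆ = 0 := by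
  induction i using Fin.lastCases <;> induction j using Fin.lastCases <;>
    induction k using Fin.lastCases <;>
    simp_all [dkDer_left, dkDer_right, -add_lie, dkDer_triple, lie_add_lie_swap]

/-- The homomorphism from the free Lie algebra on the symbols `t_{ij}` to `F ⋊ Der F` which
descends to the Drinfeld–Kohno Lie algebra. -/
noncomputable def dkRepr (n : ℕ) : FreeLieAlgebra ℂ (DKGen (n + 1)) →ₗ⁅ℂ⁆ FreeDerSum n :=
  FreeLieAlgebra.lift ℂ fun p : DKGen (n + 1) => dkImg p.1.1 p.1.2

theorem dkRepr_dkGen (i j : Fin (n + 1)) : dkRepr n (dkGen (n + 1) i j) = dkImg i j := by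
  unfold dkGen
  split_ifs with h
  · exact FreeLieAlgebra.lift_of_apply _ _
  · rw [not_not] at h
    rw [h, dkImg_self, map_zero]

theorem dkRepr_eq_zero_of_mem {x : FreeLieAlgebra ℂ (DKGen (n + 1))}
    (hx : x ∈ dkIdeal (n + 1)) : dkRepr n x = 0 := by
  have hle : dkIdeal (n + 1) ≤ (dkRepr n).ker := by
    refine LieSubmodule.lieSpan_le.2 ?_
    rintro y (⟨i, j, -, rfl⟩ | ⟨i, j, k, l, hij, hik, hil, hjk, hjl, hkl, rfl⟩ |
      ⟨i, j, k, hij, hik, hjk, rfl⟩)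
    · rw [SetLike.mem_coe, LieHom.mem_ker, map_sub, dkRepr_dkGen, dkRepr_dkGen,
        dkImg_symm, sub_self]
    · rw [SetLike.mem_coe, LieHom.mem_ker, LieHom.map_lie, dkRepr_dkGen, dkRepr_dkGen,
        dkImg_comm hij hik hil hjk hjl hkl]
    · rw [SetLike.mem_coe, LieHom.mem_ker, LieHom.map_lie, map_add, dkRepr_dkGen,
        dkRepr_dkGen, dkRepr_dkGen, dkImg_triple hij hik hjk]
  exact LieHom.mem_ker.1 (hle hx)

/-- The quotient map onto the Drinfeld–Kohno Lie algebra, as a homomorphism of Lie algebras. -/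
noncomputable def dkMk (N : ℕ) : FreeLieAlgebra ℂ (DKGen N) →ₗ⁅ℂ⁆ DK N where
  toFun x := LieSubmodule.Quotient.mk' (dkIdeal N) x
  map_add' _ _ := rfl
  map_smul' _ _ := rfl
  map_lie' := rfl

end Repr

/-!
STATEMENT 8: Let `n ≥ 1` and let `t_{n+1}` be the Drinfeld–Kohno Lie algebra on the
index set `{1, …, n+1}` (0-based: `{0, …, n}`, the moving point `n+1` having index
`n`). The Lie algebra homomorphism from the free Lie algebra over ℂ on `n` generators
`x_1, …, x_n` to `t_{n+1}` determined by `x_k ↦ t_{k,n+1}` is injective; in other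
words, the elements `t_{1,n+1}, …, t_{n,n+1}` generate a free Lie subalgebra `𝔣_n`
of `t_{n+1}`.
-/

theorem stmt8 (n : ℕ) (hn : 1 ≤ n) :
    Function.Injective
      (FreeLieAlgebra.lift ℂ
        (fun k : Fin n => tDK (n + 1) (Fin.castSucc k) (Fin.last n))) := by
  -- The map lifts along the quotient map to `s`, and `dkRepr n ∘ s` is the inclusion of `F`.
  let s : FreeLieAlgebra ℂ (Fin n) →ₗ⁅ℂ⁆ FreeLieAlgebra ℂ (DKGen (n + 1)) :=
    FreeLieAlgebra.lift ℂ fun k : Fin n => dkGen (n + 1) (Fin.castSucc k) (Fin.last n)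
  have hs : FreeLieAlgebra.lift ℂ
      (fun k : Fin n => tDK (n + 1) (Fin.castSucc k) (Fin.last n)) = (dkMk (n + 1)).comp s := by
    ext k
    simp [s, dkMk, tDK]
  have hr : (dkRepr n).comp s = SemiDirectSum.inl LieHom.id := by
    ext k : 1
    simp [s, dkRepr_dkGen]
  rw [injective_iff_map_eq_zero]
  intro a ha
  rw [hs] at ha
  have hmem : s a ∈ dkIdeal (n + 1) := (LieSubmodule.Quotient.mk_eq_zero' (N := dkIdeal (n + 1))).1 ha
  have h0 : dkRepr n (s a) = 0 := dkRepr_eq_zero_of_mem hmem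
  have h1 : SemiDirectSum.inl LieHom.id a = (0 : FreeDerSum n) := by
    rw [← h0]
    exact (LieHom.congr_fun hr a).symm
  exact SemiDirectSum.inl_injective _ (h1.trans (map_zero _).symm)
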